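/- Assume A satisfies Assumption 3.1. Pick a nonincreasing sequence of positive numbers h_j (j ≥ 0), run the greedy boosting algorithm with sup Λ_k = h_k, tolerances ε_k ≤ h_k²·M(s_{k+1})/2, and starting point f_0 = 0, where s_k = Σ_{i=0}^{k−1} h_i. Then for every reference function f̄ ∈ span(S) and every k ≥ 1, ΔA(f_k) ≤ (‖f̄‖₁/(s_k + ‖f̄‖₁))·ΔA(f_0) + inf_{1≤ℓ≤k} [ (ℓ·(s_ℓ + ‖f̄‖₁)/(s_k + ‖f̄‖₁))·h_0² + (k − ℓ)·h_ℓ² ]·M(s_{k+1}), where ΔA(f) = max(0, A(f) − A(f̄)). -/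

import Mathlib

/-!
Write `Δ k = max 0 (A (f k) - A fbar)` and let `W > ‖fbar‖₁`. The bound rests on the recursion
`(s (k+1) + W) Δ (k+1) ≤ (s k + W) Δ k + (s (k+1) + W) (h k)² M (s (k+1))`
(`greedy_step`). Along a direction `b ∈ S` the second derivative of `A` is at most `M (s (k+1))`
on the segment of length `h k` around `f k`, because every point of it has 1-norm at most
`s (k+1)`. A Taylor estimate at `± h k` (`taylor_upper`) compared with the greedy choice bounds
`h k * |∇A (f k) b|` uniformly in `b ∈ S`. Expanding `fbar` and `f k` over `S` and using convexity,
this becomes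
`h k * (A (f k) - A fbar) ≤ (s k + W) * (A (f k) - A (f (k+1)) + (h k)² M (s (k+1)))`.
The contraction factor `1 - h k / (s k + W)` is at most `(s k + W) / (s (k+1) + W)`, which gives
the recursion. Summing it telescopes; the error sum is split at `ℓ`, with `h j ≤ h 0` before `ℓ`
and `h j ≤ h ℓ` from `ℓ` on. Finally `W` decreases to `‖fbar‖₁`, which is allowed since `s k > 0`.
-/

open Filter Finset Set

variable {V : Type*} [AddCommGroup V] [Module ℝ V]

/-- The 1-norm `‖f‖₁` of `f` with respect to the basis set `S`: the infimum of `∑ |wʲ|`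
over all representations `f = ∑ wʲ fʲ` with `fʲ ∈ S`. -/
noncomputable def norm1 (S : Set V) (f : V) : ℝ :=
  sInf {c : ℝ | ∃ (n : ℕ) (w : Fin n → ℝ) (g : Fin n → V),
    (∀ i, g i ∈ S) ∧ f = ∑ i, w i • g i ∧ c = ∑ i, |w i|}

/-- Assumption 3.1: `A` is convex on `span S`, differentiable with gradient `∇A` (a linear
functional), and for `f ∈ span S`, `g ∈ S` the function `h ↦ A (f + h g)` is twice
differentiable with second derivative at `0` bounded by `M (‖f‖₁)`, `M` nondecreasing. -/
structure Assumption31 (S : Set V) (A : V → ℝ) (M : ℝ → ℝ) : Prop where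
  convexOn : ConvexOn ℝ (Submodule.span ℝ S : Set V) A
  differentiable : ∃ G : V → V →ₗ[ℝ] ℝ, ∀ f ∈ Submodule.span ℝ S, ∀ g ∈ Submodule.span ℝ S,
    Filter.Tendsto (fun h : ℝ => (A (f + h • g) - A f) / h)
      (nhdsWithin (0 : ℝ) {(0 : ℝ)}ᶜ) (nhds (G f g))
  mono : Monotone M
  secondDeriv : ∀ f ∈ Submodule.span ℝ S, ∀ g ∈ S, ∃ d1 d2 : ℝ → ℝ,
    (∀ h : ℝ, HasDerivAt (fun t : ℝ => A (f + t • g)) (d1 h) h) ∧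
    (∀ h : ℝ, HasDerivAt d1 (d2 h) h) ∧ d2 0 ≤ M (norm1 S f)

/-- Algorithm 2.1 (greedy boosting): `f 0 ∈ span S`; at step `k`, `Λ k` is a closed symmetric
subset of `ℝ` containing `0`, `α k ∈ Λ k`, `g k ∈ S`, `f (k+1) = f k + α k • g k`, and
`(α k, g k)` approximately minimizes `A (f k + a • b)` over `a ∈ Λ k`, `b ∈ S` up to `ε k ≥ 0`. -/
structure GreedyBoosting (S : Set V) (A : V → ℝ) (f : ℕ → V) (α : ℕ → ℝ) (g : ℕ → V)
    (Λ : ℕ → Set ℝ) (ε : ℕ → ℝ) : Prop where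
  init_mem : f 0 ∈ Submodule.span ℝ S
  lambda_closed : ∀ k, IsClosed (Λ k)
  lambda_zero : ∀ k, (0 : ℝ) ∈ Λ k
  lambda_symm : ∀ k, ∀ a ∈ Λ k, -a ∈ Λ k
  eps_nonneg : ∀ k, 0 ≤ ε k
  alpha_mem : ∀ k, α k ∈ Λ k
  g_mem : ∀ k, g k ∈ S
  step : ∀ k, f (k + 1) = f k + α k • g k
  approx_min : ∀ k, ∀ a ∈ Λ k, ∀ b ∈ S, A (f (k + 1)) ≤ A (f k + a • b) + ε k

/-- `HasRep S c f`: `f` is a linear combination of elements of `S` whose coefficients have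
absolute values summing to `c`; `norm1 S f` is the infimum of these `c`. -/
def HasRep (S : Set V) (c : ℝ) (f : V) : Prop :=
  ∃ (n : ℕ) (w : Fin n → ℝ) (g : Fin n → V),
    (∀ i, g i ∈ S) ∧ f = ∑ i, w i • g i ∧ c = ∑ i, |w i|

lemma HasRep.nonneg {S : Set V} {c : ℝ} {f : V} (hc : HasRep S c f) : 0 ≤ c := by
  obtain ⟨n, w, g, -, -, rfl⟩ := hc
  exact Finset.sum_nonneg fun i _ => abs_nonneg _

lemma HasRep.norm1_le {S : Set V} {c : ℝ} {f : V} (hc : HasRep S c f) : norm1 S f ≤ c :=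
  csInf_le ⟨0, fun _ h => HasRep.nonneg h⟩ hc

lemma hasRep_zero (S : Set V) : HasRep S 0 (0 : V) :=
  ⟨0, Fin.elim0, Fin.elim0, fun i => i.elim0, by simp, by simp⟩

lemma HasRep.add {S : Set V} {c : ℝ} {f b : V} (hc : HasRep S c f) (hb : b ∈ S) (t : ℝ) :
    HasRep S (c + |t|) (f + t • b) := by
  obtain ⟨n, w, g, hg, rfl, rfl⟩ := hc
  refine ⟨n + 1, Fin.snoc w t, Fin.snoc g b, ?_, ?_, ?_⟩
  · intro i
    refine Fin.lastCases ?_ (fun j => ?_) i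
    · simpa using hb
    · simpa using hg j
  · simp [Fin.sum_univ_castSucc]
  · simp [Fin.sum_univ_castSucc]

lemma exists_hasRep {S : Set V} {f : V} (hf : f ∈ Submodule.span ℝ S) : ∃ c, HasRep S c f := by
  obtain ⟨n, w, g, h⟩ := Submodule.mem_span_set'.1 hf
  exact ⟨_, n, w, fun i => g i, fun i => (g i).2, h.symm, rfl⟩

lemma norm1_nonneg (S : Set V) (f : V) : 0 ≤ norm1 S f :=
  Real.sInf_nonneg fun _ h => HasRep.nonneg h

lemma exists_hasRep_lt {S : Set V} {f : V} (hf : f ∈ Submodule.span ℝ S) {W : ℝ}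
    (hW : norm1 S f < W) : ∃ c < W, HasRep S c f := by
  obtain ⟨c, hc, hlt⟩ := exists_lt_of_csInf_lt (exists_hasRep hf) hW
  exact ⟨c, hlt, hc⟩

/-- A linear functional bounded by `E` on `S` is bounded by `c * E` on `c`-combinations of `S`. -/
lemma HasRep.abs_apply_le {S : Set V} {c E : ℝ} {f : V} (hc : HasRep S c f) (L : V →ₗ[ℝ] ℝ)
    (hL : ∀ b ∈ S, |L b| ≤ E) : |L f| ≤ c * E := by
  obtain ⟨n, w, g, hg, rfl, rfl⟩ := hc
  rw [map_sum, Finset.sum_mul]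
  refine (Finset.abs_sum_le_sum_abs _ _).trans (Finset.sum_le_sum fun i _ => ?_)
  rw [map_smul, smul_eq_mul, abs_mul]
  exact mul_le_mul_of_nonneg_left (hL _ (hg i)) (abs_nonneg _)

lemma taylor_upper_nonneg {φ d1 d2 : ℝ → ℝ} {C H : ℝ} (hH : 0 ≤ H)
    (h1 : ∀ t, HasDerivAt φ (d1 t) t) (h2 : ∀ t, HasDerivAt d1 (d2 t) t)
    (hC : ∀ t, |t| ≤ H → d2 t ≤ C) : φ H ≤ φ 0 + H * d1 0 + H ^ 2 * C / 2 := by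
  have k1 : ∀ t, HasDerivAt (fun t => d1 t - C * t) (d2 t - C) t := fun t => by
    exact ((h2 t).fun_sub ((hasDerivAt_id t).const_mul C)).congr_deriv (by simp)
  have k2 : ∀ t, HasDerivAt (fun t => φ t - t * d1 0 - t ^ 2 * C / 2)
      (d1 t - d1 0 - t * C) t := fun t => by
    exact (((h1 t).fun_sub ((hasDerivAt_id t).mul_const (d1 0))).fun_sub
      ((((hasDerivAt_id t).fun_pow 2).mul_const C).div_const 2)).congr_deriv (by simp; ring)
  have m1 : AntitoneOn (fun t => d1 t - C * t) (Icc 0 H) := by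
    refine antitoneOn_of_deriv_nonpos (convex_Icc 0 H)
      (fun t _ => (k1 t).continuousAt.continuousWithinAt)
      (fun t _ => (k1 t).differentiableAt.differentiableWithinAt) fun t ht => ?_
    rw [interior_Icc] at ht
    rw [(k1 t).deriv]
    have := hC t (by rw [abs_of_pos ht.1]; exact ht.2.le)
    linarith
  have m2 : AntitoneOn (fun t => φ t - t * d1 0 - t ^ 2 * C / 2) (Icc 0 H) := by
    refine antitoneOn_of_deriv_nonpos (convex_Icc 0 H)
      (fun t _ => (k2 t).continuousAt.continuousWithinAt)
      (fun t _ => (k2 t).differentiableAt.differentiableWithinAt) fun t ht => ?_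
    rw [interior_Icc] at ht
    rw [(k2 t).deriv]
    have := m1 (left_mem_Icc.2 hH) ⟨ht.1.le, ht.2.le⟩ ht.1.le
    simp only at this
    linarith
  have := m2 (left_mem_Icc.2 hH) (right_mem_Icc.2 hH) hH
  simp only at this
  linarith

/-- Second-order upper Taylor estimate at both endpoints of `[-H, H]`. -/
lemma taylor_upper {φ d1 d2 : ℝ → ℝ} {C H : ℝ} (hH : 0 ≤ H)
    (h1 : ∀ t, HasDerivAt φ (d1 t) t) (h2 : ∀ t, HasDerivAt d1 (d2 t) t)
    (hC : ∀ t, |t| ≤ H → d2 t ≤ C) :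
    φ H ≤ φ 0 + H * d1 0 + H ^ 2 * C / 2 ∧ φ (-H) ≤ φ 0 - H * d1 0 + H ^ 2 * C / 2 := by
  refine ⟨taylor_upper_nonneg hH h1 h2 hC, ?_⟩
  have := taylor_upper_nonneg (φ := fun t => φ (-t)) (d1 := fun t => -d1 (-t))
    (d2 := fun t => d2 (-t)) (C := C) hH
    (fun t => ((h1 (-t)).scomp t (hasDerivAt_neg t)).congr_deriv (by simp))
    (fun t => ((h2 (-t)).scomp t (hasDerivAt_neg t)).neg.congr_deriv (by simp))
    (fun t ht => hC (-t) (by rwa [abs_neg]))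
  simp only [neg_zero] at this
  linarith

/-- The gradient inequality for a convex function. -/
lemma gradient_le {S : Set V} {A : V → ℝ}
    (hconv : ConvexOn ℝ (Submodule.span ℝ S : Set V) A) {f u : V} {D : ℝ}
    (hf : f ∈ Submodule.span ℝ S) (hu : u ∈ Submodule.span ℝ S)
    (hD : Tendsto (fun h : ℝ => (A (f + h • (u - f)) - A f) / h)
      (nhdsWithin (0 : ℝ) {(0 : ℝ)}ᶜ) (nhds D)) : D ≤ A u - A f := by
  have hD' : Tendsto (fun h : ℝ => (A (f + h • (u - f)) - A f) / h)
      (nhdsWithin (0 : ℝ) (Ioi 0)) (nhds D) :=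
    hD.mono_left (nhdsWithin_mono _ fun x hx => ne_of_gt hx)
  refine le_of_tendsto hD' ?_
  filter_upwards [Ioo_mem_nhdsGT (zero_lt_one (α := ℝ))] with t ht
  rw [div_le_iff₀ ht.1]
  have := hconv.2 hf hu (sub_nonneg.2 ht.2.le) ht.1.le (by ring)
  have e : (1 - t) • f + t • u = f + t • (u - f) := by module
  rw [e, smul_eq_mul, smul_eq_mul] at this
  linarith

/-- Points within `H` of `f` along a direction in `S` have 1-norm at most `c + H`, so the
curvature of `A` there is at most `M (c + H)`. The derivative at `0` is identified with the
gradient `G`, which is linear in the direction. -/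
lemma direction_upper {S : Set V} {A : V → ℝ} {M : ℝ → ℝ} (hA : Assumption31 S A M)
    {f b : V} {c H G : ℝ} (hf : f ∈ Submodule.span ℝ S) (hc : HasRep S c f) (hb : b ∈ S)
    (hH : 0 ≤ H)
    (hG : Tendsto (fun h : ℝ => (A (f + h • b) - A f) / h)
      (nhdsWithin (0 : ℝ) {(0 : ℝ)}ᶜ) (nhds G)) :
    A (f + H • b) ≤ A f + H * G + H ^ 2 * M (c + H) / 2 ∧
      A (f + (-H) • b) ≤ A f - H * G + H ^ 2 * M (c + H) / 2 := by
  obtain ⟨d1, d2, h1, h2, -⟩ := hA.secondDeriv f hf b hb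
  have hG0 : d1 0 = G := by
    have := hasDerivAt_iff_tendsto_slope_zero.1 (h1 0)
    refine tendsto_nhds_unique this (hG.congr fun t => ?_)
    simp [div_eq_inv_mul]
  have hC : ∀ t, |t| ≤ H → d2 t ≤ M (c + H) := by
    intro t ht
    obtain ⟨e1, e2, k1, k2, k3⟩ :=
      hA.secondDeriv (f + t • b) (add_mem hf (Submodule.smul_mem _ _ (Submodule.subset_span hb))) b hb
    have q1 : ∀ r, e1 r = d1 (t + r) := fun r => by
      refine (k1 r).unique ?_
      have := (h1 (t + r)).comp_const_add t r
      refine this.congr_of_eventuallyEq (Eventually.of_forall fun x => ?_)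
      simp only [add_smul, add_assoc]
    have q2 : e2 0 = d2 t := by
      refine (k2 0).unique ?_
      rw [funext q1]
      simpa using (h2 (t + 0)).comp_const_add t 0
    rw [← q2]
    exact k3.trans (hA.mono ((hc.add hb t).norm1_le.trans (by linarith)))
  have := taylor_upper hH h1 h2 hC
  simpa [hG0] using this

/-- One greedy step of size `H` from a function of weight `c` towards a reference function of
weight less than `W`. -/
lemma greedy_step {S : Set V} {A : V → ℝ} {M : ℝ → ℝ} (hA : Assumption31 S A M)
    {f f' fbar : V} {c σ H W e : ℝ} (hf : f ∈ Submodule.span ℝ S) (hc : HasRep S c f)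
    (hcσ : c ≤ σ) (hfbar : fbar ∈ Submodule.span ℝ S) (hW : norm1 S fbar < W)
    (hH : 0 < H) (hne : S.Nonempty) (he0 : 0 ≤ e) (he : e ≤ H ^ 2 * M (σ + H) / 2)
    (hf' : A f' ≤ A f + e)
    (hmin : ∀ b ∈ S, A f' ≤ A (f + H • b) + e ∧ A f' ≤ A (f + (-H) • b) + e) :
    (σ + H + W) * max 0 (A f' - A fbar) ≤
      (σ + W) * max 0 (A f - A fbar) + (σ + H + W) * (H ^ 2 * M (σ + H)) := by
  obtain ⟨G, hG⟩ := hA.differentiable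
  obtain ⟨c', hc'W, hc'⟩ := exists_hasRep_lt hfbar hW
  have hσ : 0 ≤ σ := hc.nonneg.trans hcσ
  have hW0 : 0 < W := (norm1_nonneg S fbar).trans_lt hW
  have hMle : M (c + H) ≤ M (σ + H) := hA.mono (by linarith)
  have hH2 : 0 < H ^ 2 := by positivity
  set Q := H ^ 2 * M (σ + H) with hQ
  have hQ' : H ^ 2 * M (c + H) ≤ Q := mul_le_mul_of_nonneg_left hMle hH2.le
  have hQ0 : 0 ≤ Q := by linarith
  set E := A f - A f' + Q with hE
  have hGb : ∀ b ∈ S, |(H • G f) b| ≤ E := by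
    intro b hb
    obtain ⟨u1, u2⟩ := direction_upper hA hf hc hb hH.le
      (hG f hf b (Submodule.subset_span hb))
    obtain ⟨v1, v2⟩ := hmin b hb
    rw [LinearMap.smul_apply, smul_eq_mul, abs_le]
    constructor <;> linarith
  have hE0 : 0 ≤ E := by
    obtain ⟨b, hb⟩ := hne
    exact (abs_nonneg _).trans (hGb b hb)
  have a1 := neg_le_of_abs_le (hc'.abs_apply_le _ hGb)
  have a2 := le_of_abs_le (hc.abs_apply_le _ hGb)
  have hgrad := gradient_le hA.convexOn hf hfbar (hG f hf (fbar - f) (sub_mem hfbar hf))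
  have key : H * (A f - A fbar) ≤ (σ + W) * E := by
    rw [LinearMap.smul_apply, smul_eq_mul] at a1 a2
    rw [map_sub] at hgrad
    have := mul_le_mul_of_nonneg_left hgrad hH.le
    have : (c + c') * E ≤ (σ + W) * E := mul_le_mul_of_nonneg_right (by linarith) hE0
    nlinarith
  -- Below the reference level a step may only lose the tolerance `e ≤ Q`.
  rcases le_total (A f - A fbar) 0 with hD | hD
  · rw [max_eq_left hD, mul_zero, zero_add]
    exact mul_le_mul_of_nonneg_left (max_le hQ0 (by linarith)) (by linarith)
  · rw [max_eq_right hD]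
    rcases le_total (A f' - A fbar) 0 with hD' | hD'
    · rw [max_eq_left hD', mul_zero]
      have : 0 < σ + W := by linarith
      have : 0 < σ + H + W := by linarith
      positivity
    · rw [max_eq_right hD']
      set D := A f - A fbar
      set D' := A f' - A fbar
      have hEq : E = D - D' + Q := by simp only [hE, D, D']; ring
      rw [hEq] at key
      have ha : 0 < σ + W := by linarith
      -- With `a = σ + W`: `a (a + H) (D' - Q) ≤ (a + H) (a - H) D ≤ a ^ 2 D`.
      have k2 := mul_le_mul_of_nonneg_left key (show 0 ≤ σ + W + H by linarith)
      have k3 : 0 ≤ H ^ 2 * D := mul_nonneg hH2.le hD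
      refine le_of_mul_le_mul_left ?_ ha
      nlinarith

/-- Corollary 4.3: with a nonincreasing positive step-size sequence `h`, `sup (Λ k) = h k`,
`ε k ≤ (h k)² M (s (k+1))/2` and `f 0 = 0`, for every reference function `f̄ ∈ span S`,
every `k ≥ 1` and every `1 ≤ ℓ ≤ k` (so that the stated bound holds with the infimum over
`ℓ`), `ΔA (f k) ≤ (‖f̄‖₁/(s k + ‖f̄‖₁)) ΔA (f 0)
  + [ (ℓ (s ℓ + ‖f̄‖₁)/(s k + ‖f̄‖₁)) h 0² + (k - ℓ) (h ℓ)² ] M (s (k+1))`. -/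
theorem corollary_4_3 (S : Set V) (A : V → ℝ) (M : ℝ → ℝ)
    (hA : Assumption31 S A M)
    (h : ℕ → ℝ) (hpos : ∀ j, 0 < h j) (hmono : Antitone h)
    (s : ℕ → ℝ) (hs : ∀ k, s k = ∑ i ∈ Finset.range k, h i)
    (f : ℕ → V) (α : ℕ → ℝ) (g : ℕ → V) (Λ : ℕ → Set ℝ) (ε : ℕ → ℝ)
    (hboost : GreedyBoosting S A f α g Λ ε)
    (hΛ : ∀ k, IsLUB (Λ k) (h k))
    (hε : ∀ k, ε k ≤ h k ^ 2 * M (s (k + 1)) / 2)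
    (hf0 : f 0 = 0)
    (fbar : V) (hfbar : fbar ∈ Submodule.span ℝ S)
    (k ℓ : ℕ) (hℓ1 : 1 ≤ ℓ) (hℓk : ℓ ≤ k) :
    max 0 (A (f k) - A fbar) ≤
      norm1 S fbar / (s k + norm1 S fbar) * max 0 (A (f 0) - A fbar)
        + ((ℓ : ℝ) * (s ℓ + norm1 S fbar) / (s k + norm1 S fbar) * h 0 ^ 2
            + ((k : ℝ) - (ℓ : ℝ)) * h ℓ ^ 2) * M (s (k + 1)) := by
  have hs0 : s 0 = 0 := by simp [hs]
  have hsS : ∀ j, s (j + 1) = s j + h j := fun j => by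
    rw [hs, hs, Finset.sum_range_succ]
  have hsmono : Monotone s := monotone_nat_of_le_succ fun j => by
    rw [hsS]; linarith [hpos j]
  have hspos : 0 < s k := by
    have h1 : s 1 ≤ s k := hsmono (hℓ1.trans hℓk)
    have h2 := hsS 0
    have h3 := hpos 0
    norm_num at h2
    linarith
  have hrep : ∀ j, f j ∈ Submodule.span ℝ S ∧ ∃ c ≤ s j, HasRep S c (f j) := by
    intro j
    induction j with
    | zero => exact ⟨hboost.init_mem, 0, hs0.ge, by rw [hf0]; exact hasRep_zero S⟩
    | succ j ih =>
      obtain ⟨hm, c, hc, hr⟩ := ih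
      have hα : |α j| ≤ h j := abs_le'.2 ⟨(hΛ j).1 (hboost.alpha_mem j),
        (hΛ j).1 (hboost.lambda_symm j _ (hboost.alpha_mem j))⟩
      rw [hboost.step j]
      exact ⟨add_mem hm (Submodule.smul_mem _ _ (Submodule.subset_span (hboost.g_mem j))),
        c + |α j|, by rw [hsS]; linarith, hr.add (hboost.g_mem j) _⟩
  have hM0 : 0 ≤ M (s (k + 1)) := by
    have h1 := (hboost.eps_nonneg k).trans (hε k)
    have h2 : 0 < h k ^ 2 := pow_pos (hpos k) 2
    by_contra! hneg
    nlinarith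
  -- The estimate with any `W > ‖fbar‖₁` in place of `‖fbar‖₁`.
  have main : ∀ W, norm1 S fbar < W → max 0 (A (f k) - A fbar) ≤
      W / (s k + W) * max 0 (A (f 0) - A fbar)
        + ((ℓ : ℝ) * (s ℓ + W) / (s k + W) * h 0 ^ 2
            + ((k : ℝ) - (ℓ : ℝ)) * h ℓ ^ 2) * M (s (k + 1)) := by
    intro W hW
    have hW0 : 0 < W := (norm1_nonneg S fbar).trans_lt hW
    have hs_nonneg : ∀ j, 0 ≤ s j := fun j => hs0 ▸ hsmono (Nat.zero_le j)
    have step : ∀ j, (s (j + 1) + W) * max 0 (A (f (j + 1)) - A fbar) ≤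
        (s j + W) * max 0 (A (f j) - A fbar)
          + (s (j + 1) + W) * (h j ^ 2 * M (s (j + 1))) := by
      intro j
      obtain ⟨hm, c, hc, hr⟩ := hrep j
      have hmem : h j ∈ Λ j := (hΛ j).mem_of_isClosed ⟨0, hboost.lambda_zero j⟩
        (hboost.lambda_closed j)
      have hstep0 := hboost.approx_min j 0 (hboost.lambda_zero j) (g j) (hboost.g_mem j)
      rw [zero_smul, add_zero] at hstep0
      have he := hε j
      rw [hsS] at he ⊢
      exact greedy_step hA hm hr hc hfbar hW (hpos j) ⟨g j, hboost.g_mem j⟩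
        (hboost.eps_nonneg j) he hstep0 fun b hb =>
          ⟨hboost.approx_min j _ hmem b hb,
            hboost.approx_min j _ (hboost.lambda_symm j _ hmem) b hb⟩
    have hMle : ∀ j, j < k → M (s (j + 1)) ≤ M (s (k + 1)) := fun j hj =>
      hA.mono (hsmono (by omega))
    have term : ∀ j m r, j < k → j + 1 ≤ m → h j ≤ r →
        (s (j + 1) + W) * (h j ^ 2 * M (s (j + 1))) ≤
          (s m + W) * (r ^ 2 * M (s (k + 1))) := by
      intro j m r hj hm hr
      have h1 : s (j + 1) + W ≤ s m + W := by linarith [hsmono hm]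
      have h2 : h j ^ 2 ≤ r ^ 2 := pow_le_pow_left₀ (hpos j).le hr 2
      have h3 : h j ^ 2 * M (s (j + 1)) ≤ r ^ 2 * M (s (k + 1)) :=
        (mul_le_mul_of_nonneg_left (hMle j hj) (sq_nonneg _)).trans
          (mul_le_mul_of_nonneg_right h2 hM0)
      have := hs_nonneg (j + 1)
      have := hs_nonneg m
      exact (mul_le_mul_of_nonneg_left h3 (by linarith)).trans
        (mul_le_mul_of_nonneg_right h1 (mul_nonneg (sq_nonneg _) hM0))
    have first : ∀ i, i ≤ ℓ → (s i + W) * max 0 (A (f i) - A fbar) ≤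
        W * max 0 (A (f 0) - A fbar)
          + (i : ℝ) * ((s ℓ + W) * (h 0 ^ 2 * M (s (k + 1)))) := by
      intro i
      induction i with
      | zero => intro _; simp [hs0]
      | succ i ih =>
        intro hi
        have h1 := ih (by omega)
        have h2 := step i
        have h3 := term i ℓ (h 0) (by omega) hi (hmono (Nat.zero_le i))
        push_cast
        linarith
    have second : ∀ i, ℓ ≤ i → i ≤ k → (s i + W) * max 0 (A (f i) - A fbar) ≤
        (s ℓ + W) * max 0 (A (f ℓ) - A fbar)
          + ((i : ℝ) - ℓ) * ((s k + W) * (h ℓ ^ 2 * M (s (k + 1)))) := by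
      intro i hi
      induction i, hi using Nat.le_induction with
      | base => intro _; simp
      | succ i hi ih =>
        intro hik
        have h1 := ih (by omega)
        have h2 := step i
        have h3 := term i k (h ℓ) (by omega) hik (hmono hi)
        push_cast
        linarith
    have t1 := first ℓ le_rfl
    have t2 := second k hℓk le_rfl
    have hpos' : 0 < s k + W := by linarith
    refine le_of_mul_le_mul_left ?_ hpos'
    have e : (s k + W) * (W / (s k + W) * max 0 (A (f 0) - A fbar)
        + ((ℓ : ℝ) * (s ℓ + W) / (s k + W) * h 0 ^ 2
            + ((k : ℝ) - (ℓ : ℝ)) * h ℓ ^ 2) * M (s (k + 1))) =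
        W * max 0 (A (f 0) - A fbar) + ℓ * ((s ℓ + W) * (h 0 ^ 2 * M (s (k + 1))))
          + ((k : ℝ) - ℓ) * ((s k + W) * (h ℓ ^ 2 * M (s (k + 1)))) := by
      field_simp
      ring
    rw [e]
    linarith
  have hne : s k + norm1 S fbar ≠ 0 := by
    have := norm1_nonneg S fbar
    linarith
  have hcont : ContinuousAt (fun W : ℝ => W / (s k + W) * max 0 (A (f 0) - A fbar)
      + ((ℓ : ℝ) * (s ℓ + W) / (s k + W) * h 0 ^ 2
          + ((k : ℝ) - (ℓ : ℝ)) * h ℓ ^ 2) * M (s (k + 1))) (norm1 S fbar) := by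
    fun_prop (disch := assumption)
  refine ge_of_tendsto (hcont.tendsto.mono_left (nhdsWithin_le_nhds (s := Ioi (norm1 S fbar)))) ?_
  filter_upwards [self_mem_nhdsWithin] with W hW
  exact main W hW
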